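/- arXiv:2401.02434 — 3 statements merged into one kernel-verified Lean document; each statement's English description precedes it below -/
import Mathlib

section
/- Let k ≥ 1 and let a_1, …, a_k be positive integers with a_k ≥ 2, and let q = cf(a_1, …, a_k). Set M = (Σ_{i=1}^k a_i) − 1 and N = 1 + Σ_{i=1}^{k−1} 2^{(Σ_{j=1}^{i} a_j) − 1} (so N = 1 when k = 1). Then q occupies the N-th position in level M of the S-tree: there exists a bit string s of length M − 1 whose binary value is N − 1 such that S s = q. -/
/-!
Read the bits of a string from the last to the first, so that `Sa` and the binary value both recurse
on the head of the list. A bit `false` sends the reciprocal `1 / x` to `1 / x + 1`, hence `n` of them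
send `x` to `x / (1 + n x)` and multiply the binary value by `2 ^ n`.

The string for `[a]` consists of `a - 2` zeros, which send `1 / 2` to `1 / a`. If `r` is the reversed
string for the tail `t`, with value `x = cf t`, the one for `a :: t` is `a - 1` zeros followed by a
`true` and then `r`: the `true` gives `1 / (1 + x)`, the zeros `1 / (a + x)`. The binary value `v`
becomes `2 ^ (a - 1) * (2 * v + 1)`, which is the recursion satisfied by the sum of powers of two
indexed by the proper prefixes of `a :: t`.
-/

/-- Helper computing the S-tree value from the reversed 0-1 sequence. -/
def Sa : List Bool → ℚ
  | [] => 1/2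
  | b :: t => if b then 1 / (1 + Sa t) else Sa t / (1 + Sa t)

/-- The S-tree map: `S [] = 1/2`, `S (s ++ [false]) = S s / (1 + S s)` and
`S (s ++ [true]) = 1 / (1 + S s)`. -/
def S (s : List Bool) : ℚ := Sa s.reverse

/-- Continued fraction value `cf [a₁, …, a_k] = 1/(a₁ + 1/(a₂ + ⋯ + 1/a_k))`. -/
def cf : List ℕ → ℚ
  | [] => 0
  | a :: t => 1 / ((a : ℚ) + cf t)

/-- Binary value of a 0-1 sequence, most significant bit first. -/
def binVal (s : List Bool) : ℕ := s.foldl (fun v b => 2 * v + (if b then 1 else 0)) 0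

lemma Sa_pos (r : List Bool) : 0 < Sa r := by
  induction r with
  | nil => norm_num [Sa]
  | cons b t ih =>
    rw [Sa]
    split_ifs <;> positivity

lemma Sa_replicate_false (n : ℕ) (r : List Bool) :
    Sa (List.replicate n false ++ r) = Sa r / (1 + n * Sa r) := by
  have hr := Sa_pos r
  induction n with
  | zero => simp
  | succ n ih =>
    rw [List.replicate_succ, List.cons_append, Sa, ih]
    simp only [Bool.false_eq_true, if_false]
    push_cast
    field_simp
    ring

lemma binVal_reverse_cons (b : Bool) (r : List Bool) :
    binVal (b :: r).reverse = 2 * binVal r.reverse + (if b then 1 else 0) := by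
  simp [binVal, List.foldl_append]

lemma binVal_reverse_replicate_false (n : ℕ) (r : List Bool) :
    binVal (List.replicate n false ++ r).reverse = 2 ^ n * binVal r.reverse := by
  induction n with
  | zero => simp
  | succ n ih =>
    rw [List.replicate_succ, List.cons_append, binVal_reverse_cons, ih]
    simp [pow_succ]
    ring

/-- The locating statement for reversed strings, with the list given as head and tail. -/
lemma exists_reversed_string (t : List ℕ) : ∀ a : ℕ, (∀ c ∈ a :: t, 0 < c) →
    2 ≤ (a :: t).getLast (List.cons_ne_nil a t) →
    ∃ r : List Bool,
      r.length + 2 = (a :: t).sum ∧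
      binVal r.reverse =
        ∑ i ∈ Finset.range t.length, 2 ^ (((a :: t).take (i + 1)).sum - 1) ∧
      Sa r = cf (a :: t) := by
  induction t with
  | nil =>
    intro a _ hlast
    obtain ⟨n, rfl⟩ : ∃ n, a = n + 2 := ⟨a - 2, by simp at hlast; omega⟩
    refine ⟨List.replicate n false ++ [], by simp, ?_, ?_⟩
    · rw [binVal_reverse_replicate_false]
      simp [binVal]
    · rw [Sa_replicate_false]
      simp only [Sa, cf]
      push_cast
      field_simp
      ring
  | cons b t ih =>
    intro a hpos hlast
    obtain ⟨r, hlen, hval, hcf⟩ := ih b (fun c hc => hpos c (List.mem_cons_of_mem a hc))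
      (by simpa using hlast)
    obtain ⟨n, rfl⟩ : ∃ n, a = n + 1 := ⟨a - 1, by have := hpos a (by simp); omega⟩
    have hb : 0 < b := hpos b (by simp)
    refine ⟨List.replicate n false ++ true :: r, ?_, ?_, ?_⟩
    · rw [List.sum_cons, ← hlen]
      simp
      omega
    · rw [binVal_reverse_replicate_false, binVal_reverse_cons, hval, List.length_cons,
        Finset.sum_range_succ', mul_add, ← mul_assoc, Finset.mul_sum]
      congr 1
      · refine Finset.sum_congr rfl fun i _ => ?_
        -- The prefix sum is positive, so its truncated predecessor is the true one.
        have hexp : (((n + 1) :: b :: t).take (i + 1 + 1)).sum - 1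
            = (n + 1) + (((b :: t).take (i + 1)).sum - 1) := by
          simp only [List.take_succ_cons, List.sum_cons]
          omega
        rw [hexp, pow_add, pow_succ]
      · simp
    · have hr := Sa_pos r
      rw [Sa_replicate_false, Sa, cf, ← hcf]
      simp only [if_true]
      push_cast
      field_simp
      ring

/-- Locating theorem for the S-tree: for positive `a₁, …, a_k` (`k ≥ 1`) with `a_k ≥ 2`
and `q = cf (a₁, …, a_k)`, setting `M = (Σᵢ aᵢ) − 1` and
`N = 1 + Σ_{i=1}^{k−1} 2^{(Σ_{j=1}^{i} a_j) − 1}`, the rational `q` is the `N`-th vertex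
in level `M` of the S-tree: there is a bit string `s` of length `M − 1` with binary
value `N − 1` such that `S s = q`. -/
theorem stree_locating (l : List ℕ) (hne : l ≠ []) (hpos : ∀ a ∈ l, 0 < a)
    (hlast : 2 ≤ l.getLast hne) :
    ∃ s : List Bool,
      s.length = (l.sum - 1) - 1 ∧
      binVal s = (1 + ∑ i ∈ Finset.range (l.length - 1), 2 ^ ((l.take (i + 1)).sum - 1)) - 1 ∧
      S s = cf l := by
  obtain ⟨a, t, rfl⟩ := List.exists_cons_of_ne_nil hne
  obtain ⟨r, hlen, hval, hcf⟩ := exists_reversed_string t a hpos hlast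
  refine ⟨r.reverse, ?_, ?_, ?_⟩
  · rw [List.length_reverse]
    omega
  · rw [hval, Nat.add_sub_cancel_left]
    simp
  · rw [S, List.reverse_reverse, hcf]
end

section
/- Let k ≥ 1 and let a_1, …, a_k be positive integers with a_k ≥ 2. Then the SC-tree vertex at position [true] ++ replicate (a_1 − 1) false ++ [true] ++ replicate (a_2 − 1) false ++ ⋯ ++ [true] ++ replicate (a_{k−1} − 1) false ++ [true] ++ replicate (a_k − 2) false, read as a fraction, equals cf(a_1, …, a_k). That is, the rational t ∈ (0,1) with continued fraction [0; a_1, …, a_k] has this bit string as its 0-1 sequence on the SC-tree. -/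
/-!
The state recursion is linear, so *prepending* a bit to a 0-1 sequence changes the initial state
and therefore acts on the vertex `(x, y)` by a fixed linear map: `false` acts by
`(x, y) ↦ (x + y, y)` and `true` by `(x, y) ↦ (y, x + y)` (`V_false_cons`, `V_true_cons`).
Hence a block `true :: replicate (a - 1) false` in front sends `(x, y)` to `(y, x + a * y)`, that
is, it sends the fraction `t = x / y` to `1 / (a + t)`, which is the recursion defining `cf`.
The last block, of length `a - 1`, acts on the root vertex `(1, 1)` and gives `(1, a)`.
-/

/-- Helper computing the SC-tree state from the reversed 0-1 sequence. -/
def Ha : List Bool → (ℕ × ℕ) × (ℕ × ℕ)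
  | [] => ((1, 0), (0, 1))
  | b :: t =>
      if b then ((Ha t).2, (Ha t).1 + (Ha t).2) else ((Ha t).1, (Ha t).1 + (Ha t).2)

/-- The SC-tree state map: `H [] = ((1,0),(0,1))` and, if `H s = (p, d)`, then
`H (s ++ [false]) = (p, p + d)` and `H (s ++ [true]) = (d, p + d)`. -/
def H (s : List Bool) : (ℕ × ℕ) × (ℕ × ℕ) := Ha s.reverse

/-- The SC-tree vertex at position `s`: the pair `p + d`, regarded as a fraction. -/
def V (s : List Bool) : ℕ × ℕ := (H s).1 + (H s).2

/-- The tail of the SC-tree 0-1 sequence of a continued fraction `[a₁, …, a_k]`: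
`true :: replicate (a₁ − 1) false ++ ⋯ ++ true :: replicate (a_{k−1} − 1) false ++
true :: replicate (a_k − 2) false`. -/
def scSeq : List ℕ → List Bool
  | [] => []
  | [a] => true :: List.replicate (a - 2) false
  | a :: t => (true :: List.replicate (a - 1) false) ++ scSeq t

theorem Ha_append_false (t : List Bool) :
    Ha (t ++ [false]) =
      (((Ha t).1.1 + (Ha t).1.2, (Ha t).1.2), ((Ha t).2.1 + (Ha t).2.2, (Ha t).2.2)) := by
  induction t with
  | nil => simp [Ha]
  | cons b t ih =>
    cases b <;> simp [Ha, ih] <;> ring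

theorem Ha_append_true (t : List Bool) :
    Ha (t ++ [true]) =
      (((Ha t).1.2, (Ha t).1.1 + (Ha t).1.2), ((Ha t).2.2, (Ha t).2.1 + (Ha t).2.2)) := by
  induction t with
  | nil => simp [Ha]
  | cons b t ih =>
    cases b <;> simp [Ha, ih] <;> ring

theorem V_false_cons (s : List Bool) : V (false :: s) = ((V s).1 + (V s).2, (V s).2) := by
  simp only [V, H, List.reverse_cons, Ha_append_false, Prod.fst_add, Prod.snd_add, Prod.mk_add_mk,
    Prod.mk.injEq, and_true]
  ring

theorem V_true_cons (s : List Bool) : V (true :: s) = ((V s).2, (V s).1 + (V s).2) := by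
  simp only [V, H, List.reverse_cons, Ha_append_true, Prod.fst_add, Prod.snd_add, Prod.mk_add_mk,
    Prod.mk.injEq, true_and]
  ring

theorem V_replicate_false_append (n : ℕ) (s : List Bool) :
    V (List.replicate n false ++ s) = ((V s).1 + n * (V s).2, (V s).2) := by
  induction n with
  | zero => simp
  | succ n ih =>
    simp only [List.replicate_succ, List.cons_append, V_false_cons, ih, Prod.mk.injEq, and_true]
    ring

theorem V_nil : V [] = (1, 1) := rfl

theorem V_snd_pos (s : List Bool) : 0 < (V s).2 := by
  induction s with
  | nil => simp [V_nil]
  | cons b s ih =>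
    cases b
    · simpa [V_false_cons] using ih
    · simp only [V_true_cons]
      omega

/-- A block `true :: replicate n false` in front of `s` acts on the vertex by
`(x, y) ↦ (y, x + (n + 1) * y)`. -/
theorem V_block_append (n : ℕ) (s : List Bool) :
    V ((true :: List.replicate n false) ++ s) = ((V s).2, (V s).1 + (n + 1) * (V s).2) := by
  simp only [List.cons_append, V_true_cons, V_replicate_false_append, Prod.mk.injEq, true_and]
  ring

/-- For positive integers `a₁, …, a_k` (`k ≥ 1`) with `a_k ≥ 2`, the SC-tree vertex at
position `[true] ++ replicate (a₁−1) false ++ [true] ++ replicate (a₂−1) false ++ ⋯ ++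
[true] ++ replicate (a_k−2) false`, read as a fraction, equals `cf (a₁, …, a_k)`. -/
theorem sctree_cf_lt_one (l : List ℕ) (hne : l ≠ []) (hpos : ∀ a ∈ l, 0 < a)
    (hlast : 2 ≤ l.getLast hne) :
    ((V (scSeq l)).1 : ℚ) / ((V (scSeq l)).2 : ℚ) = cf l := by
  induction l with
  | nil => exact absurd rfl hne
  | cons a t ih =>
    cases t with
    | nil =>
      have ha : 2 ≤ a := by simpa using hlast
      obtain ⟨n, rfl⟩ := Nat.exists_eq_add_of_le' ha
      have h := V_block_append n []
      rw [List.append_nil, V_nil] at h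
      simp only [scSeq, cf, Nat.add_sub_cancel, h]
      push_cast
      ring
    | cons b t =>
      have ha : 0 < a := hpos a (by simp)
      obtain ⟨n, rfl⟩ := Nat.exists_eq_add_of_le' (Nat.succ_le_of_lt ha)
      have ih' := ih (by simp) (fun c hc => hpos c (List.mem_cons_of_mem _ hc))
        (by simpa using hlast)
      have hseq : scSeq ((n + 1) :: b :: t) =
          (true :: List.replicate n false) ++ scSeq (b :: t) := rfl
      have hcf : cf ((n + 1) :: b :: t) = 1 / (((n + 1 : ℕ) : ℚ) + cf (b :: t)) := rfl
      have hy : ((V (scSeq (b :: t))).2 : ℚ) ≠ 0 := by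
        exact_mod_cast (V_snd_pos _).ne'
      rw [Nat.succ_eq_add_one, Nat.zero_add, hseq, hcf, ← ih', V_block_append]
      push_cast
      -- dividing numerator and denominator of `y / (x + (n + 1) * y)` by `y ≠ 0`
      rw [← div_div_div_cancel_right₀ hy, div_self hy, add_div, mul_div_cancel_right₀ _ hy,
        add_comm ((_ : ℚ) / _)]
end

section
/- For every bit string s, C (s.map not) = (C s)⁻¹: interchanging the symbols 0 and 1 in the 0-1 sequence of a vertex of the Calkin–Wilf tree replaces that vertex by its reciprocal (the symmetry of the Calkin–Wilf tree used in the proof of Theorem 3.2). -/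
/-!
The two child maps `x ↦ 1 + x` and `x ↦ x / (1 + x)` are conjugate under `x ↦ x⁻¹` on positive
rationals: `1 + x⁻¹ = (x / (1 + x))⁻¹`. All values in the tree are positive (`Ca_pos`), and the
root `1` is its own reciprocal, so the symmetry follows by induction on the path (`Ca_map_not`).
-/

/-- Helper computing the Calkin–Wilf value from the reversed 0-1 sequence. -/
def Ca : List Bool → ℚ
  | [] => 1
  | b :: t => if b then 1 + Ca t else Ca t / (1 + Ca t)

/-- The Calkin–Wilf tree map: `C [] = 1`, `C (s ++ [false]) = C s / (1 + C s)` and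
`C (s ++ [true]) = 1 + C s`. -/
def C (s : List Bool) : ℚ := Ca s.reverse

theorem Ca_pos (t : List Bool) : 0 < Ca t := by
  induction t with
  | nil => simp [Ca]
  | cons b t ih =>
    cases b <;> simp only [Ca, Bool.false_eq_true, if_true, if_false] <;> positivity

theorem Ca_map_not (t : List Bool) : Ca (t.map not) = (Ca t)⁻¹ := by
  induction t with
  | nil => simp [Ca]
  | cons b t ih =>
    have h := Ca_pos t
    cases b <;>
      simp only [List.map_cons, Bool.not_true, Bool.not_false, Ca, Bool.false_eq_true, if_true,
        if_false, ih] <;>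
      field_simp <;> ring

/-- Symmetry of the Calkin–Wilf tree: interchanging the symbols `0` and `1` in the
0-1 sequence of a vertex replaces that vertex by its reciprocal. -/
theorem calkinWilf_symmetry (s : List Bool) :
    C (s.map not) = (C s)⁻¹ := by
  unfold C
  rw [← List.map_reverse, Ca_map_not]
end
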